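/- Among the 35 circulant matrices P⁷^i + P⁷^j + P⁷^k of order 7, where 0 ≤ i < j < k ≤ 6 and P⁷ is the 7×7 permutation matrix of the cycle (1 2 … 7), exactly 21 have an odd permanent. -/

import Mathlib

open Matrix

/-- `P₇`: the 7×7 permutation matrix of the cycle `(1 2 … 7)`. -/
def P7 : Matrix (Fin 7) (Fin 7) ℤ := (finRotate 7).permMatrix ℤ

/-!
Modulo 2 the permanent is the determinant, so over an algebraically closed field `K` of
characteristic 2 the spectral mapping theorem says that an integral polynomial `q(Pₙ)` has odd
permanent if and only if `q` has no zero among the `n`-th roots of unity of `K`. For `n = 7` these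
are `1`, the zeros `α` of `X³ + X + 1` and their inverses. A trinomial does not vanish at `1`. At
`α`, a primitive seventh root of unity, `∑ x ∈ S, αˣ` with `#S = 3` vanishes exactly when `S` is a
line of the Fano plane of translates of `{0, 1, 3}`: any two exponents lie on a line, and this
determines the third one. At `α⁻¹` it vanishes exactly when `-S` is a line. The lines and their
negatives are `7 + 7` of the 35 sets `S`.
-/

open Polynomial Finset
open scoped Pointwise

section Permanent

variable {m : Type*} [Fintype m] [DecidableEq m]

theorem permanent_eq_det_of_charTwo {R : Type*} [CommRing R] [CharP R 2] (A : Matrix m m R) :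
    A.permanent = A.det := by
  rw [permanent, det_apply]
  refine Finset.sum_congr rfl fun σ _ => ?_
  obtain h | h := Int.units_eq_one_or (Equiv.Perm.sign σ) <;> simp [h, CharTwo.neg_eq]

theorem odd_permanent_iff_isUnit_map_of_charTwo (K : Type*) [Field K] [CharP K 2]
    (A : Matrix m m ℤ) :
    Odd A.permanent ↔ IsUnit (A.map (Int.cast : ℤ → K)) := by
  have permanent_map : (A.permanent : K) = (A.map (Int.cast : ℤ → K)).permanent := by
    simp [permanent]
  rw [isUnit_iff_isUnit_det, ← permanent_eq_det_of_charTwo, ← permanent_map, isUnit_iff_ne_zero,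
    Ne, CharP.intCast_eq_zero_iff K 2, Nat.cast_ofNat, ← even_iff_two_dvd, Int.not_even_iff_odd]

end Permanent

theorem isUnit_aeval_iff_forall_mem_spectrum {K A : Type*} [Field K] [IsAlgClosed K] [Ring A]
    [Algebra K A] [FiniteDimensional K A] (a : A) (q : K[X]) :
    IsUnit (aeval a q) ↔ ∀ μ ∈ spectrum K a, q.eval μ ≠ 0 := by
  nontriviality A
  rw [← spectrum.zero_notMem_iff K, spectrum.map_polynomial_aeval_of_nonempty a q
    (spectrum.nonempty_of_isAlgClosed_of_finiteDimensional K a)]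
  simp only [Set.mem_image, not_exists, not_and, ne_eq]

section Cyclic

variable {n : ℕ}

theorem pow_fin_val_add {M : Type*} [Monoid M] {a : M} (ha : a ^ n = 1) (x y : Fin n) :
    a ^ ((x + y : Fin n) : ℕ) = a ^ (x : ℕ) * a ^ (y : ℕ) := by
  rw [Fin.val_add, ← pow_eq_pow_mod _ ha, pow_add]

variable [NeZero n]

theorem pow_fin_val_neg {K : Type*} [DivisionRing K] {a : K} (ha : a ^ n = 1) (x : Fin n) :
    a ^ ((-x : Fin n) : ℕ) = a⁻¹ ^ (x : ℕ) := by
  rw [inv_pow]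
  apply eq_inv_of_mul_eq_one_left
  rw [← pow_fin_val_add ha, neg_add_cancel, Fin.val_zero, pow_zero]

theorem sum_vadd_pow_fin_val {R : Type*} [Semiring R] {a : R} (ha : a ^ n = 1) (t : Fin n)
    (S : Finset (Fin n)) :
    ∑ x ∈ t +ᵥ S, a ^ (x : ℕ) = a ^ (t : ℕ) * ∑ x ∈ S, a ^ (x : ℕ) := by
  rw [vadd_finset_def, sum_image (AddAction.injective t).injOn, mul_sum]
  simp only [vadd_eq_add, pow_fin_val_add ha]

theorem sum_neg_pow_fin_val {K : Type*} [DivisionRing K] {a : K} (ha : a ^ n = 1)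
    (S : Finset (Fin n)) :
    ∑ x ∈ -S, a ^ (x : ℕ) = ∑ x ∈ S, a⁻¹ ^ (x : ℕ) := by
  rw [Finset.sum_neg_index]
  simp only [pow_fin_val_neg ha]

theorem permMatrix_finRotate_mulVec_eq_smul_iff {R : Type*} [CommRing R] (μ : R) (v : Fin n → R) :
    (finRotate n).permMatrix R *ᵥ v = μ • v ↔ ∀ i, v (i + 1) = μ * v i := by
  simp only [permMatrix_mulVec, funext_iff, Function.comp_apply, finRotate_apply, Pi.smul_apply,
    smul_eq_mul]

theorem spectrum_permMatrix_finRotate (K : Type*) [Field K] :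
    spectrum K ((finRotate n).permMatrix K) = {ζ | ζ ^ n = 1} := by
  ext ζ
  rw [← spectrum_toLin', ← Module.End.hasEigenvalue_iff_mem_spectrum, Set.mem_ofPred_eq]
  constructor
  · intro h
    obtain ⟨v, hv⟩ := h.exists_hasEigenvector
    have step := (permMatrix_finRotate_mulVec_eq_smul_iff ζ v).1 hv.apply_eq_smul
    have iterate (i : Fin n) (k : ℕ) : v (i + k • 1) = ζ ^ k * v i := by
      induction k with
      | zero => simp
      | succ k ih => rw [succ_nsmul, ← add_assoc, step, ih, pow_succ', mul_assoc]
    obtain ⟨i, hi⟩ := Function.ne_iff.1 hv.2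
    have around := iterate i n
    have nsmul_one : n • (1 : Fin n) = 0 := by simpa using card_nsmul_eq_zero (x := (1 : Fin n))
    rw [nsmul_one, add_zero] at around
    exact (right_eq_mul₀ hi).1 around
  · intro hζ
    refine Module.End.hasEigenvalue_of_hasEigenvector (x := fun i => ζ ^ (i : ℕ))
      (Module.End.hasEigenvector_iff.2 ⟨Module.End.mem_eigenspace_iff.2 ?_, ?_⟩)
    · refine (permMatrix_finRotate_mulVec_eq_smul_iff ζ _).2 fun i => ?_
      have pow_val_one : ζ ^ ((1 : Fin n) : ℕ) = ζ := by
        rw [Fin.val_one', ← pow_eq_pow_mod 1 hζ, pow_one]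
      rw [pow_fin_val_add hζ, pow_val_one, mul_comm]
    · exact Function.ne_iff.2 ⟨0, by simp⟩

theorem odd_permanent_aeval_permMatrix_finRotate_iff (K : Type*) [Field K] [IsAlgClosed K]
    [CharP K 2] (q : ℤ[X]) :
    Odd (aeval ((finRotate n).permMatrix ℤ) q).permanent ↔
      ∀ ζ : K, ζ ^ n = 1 → aeval ζ q ≠ 0 := by
  have map_aeval : (aeval ((finRotate n).permMatrix ℤ) q).map (Int.cast : ℤ → K) =
      aeval ((finRotate n).permMatrix K) (q.map (Int.castRingHom K)) := by
    have map_perm : ((finRotate n).permMatrix ℤ).map (Int.cast : ℤ → K) =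
        (finRotate n).permMatrix K :=
      PEquiv.map_toMatrix (Int.castRingHom K) _
    rw [← algebraMap_int_eq, aeval_map_algebraMap, ← map_perm]
    exact (aeval_algHom_apply (Int.castRingHom K).toIntAlgHom.mapMatrix _ q).symm
  rw [odd_permanent_iff_isUnit_map_of_charTwo K, map_aeval, isUnit_aeval_iff_forall_mem_spectrum,
    spectrum_permMatrix_finRotate]
  simp only [Set.mem_ofPred_eq, eval_map, aeval_def, algebraMap_int_eq]

end Cyclic

/-- The lines of the Fano plane with point set `ℤ/7`, as the translates of the difference set
`{0, 1, 3}`; they are the exponent sets of the trinomials divisible by `X³ + X + 1` modulo 2. -/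
def IsFanoLine (S : Finset (Fin 7)) : Prop := ∃ t : Fin 7, S = t +ᵥ ({0, 1, 3} : Finset (Fin 7))

instance : DecidablePred IsFanoLine := fun S =>
  inferInstanceAs (Decidable (∃ t : Fin 7, S = t +ᵥ ({0, 1, 3} : Finset (Fin 7))))

theorem exists_isFanoLine_of_ne :
    ∀ i j : Fin 7, i ≠ j → ∃ k, i ≠ k ∧ j ≠ k ∧ IsFanoLine {i, j, k} := by
  decide

section CharTwo

variable {R : Type*} [CommRing R] [CharP R 2]

theorem pow_seven_eq_one_of_pow_three_eq {a : R} (ha : a ^ 3 = a + 1) :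
    a ^ 7 = 1 := by
  linear_combination (a ^ 4 + a ^ 2 + a + 1) * ha +
    (a ^ 2 + a) * (CharTwo.two_eq_zero : (2 : R) = 0)

theorem isPrimitiveRoot_seven_of_pow_three_eq [Nontrivial R] {a : R} (ha : a ^ 3 = a + 1) :
    IsPrimitiveRoot a 7 := by
  have ne_one : a ≠ 1 := by
    rintro rfl
    exact one_ne_zero (by linear_combination -ha : (1 : R) = 0)
  have := Fact.mk (show Nat.Prime 7 by norm_num)
  exact orderOf_eq_prime (pow_seven_eq_one_of_pow_three_eq ha) ne_one ▸ IsPrimitiveRoot.orderOf a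

theorem IsFanoLine.sum_pow_eq_zero {a : R} (ha : a ^ 3 = a + 1) {S : Finset (Fin 7)}
    (hS : IsFanoLine S) : ∑ x ∈ S, a ^ (x : ℕ) = 0 := by
  obtain ⟨t, rfl⟩ := hS
  have base_line : ∑ x ∈ ({0, 1, 3} : Finset (Fin 7)), a ^ (x : ℕ) = 0 := by
    have : ∑ x ∈ ({0, 1, 3} : Finset (Fin 7)), a ^ (x : ℕ) = 1 + (a + a ^ 3) := by
      simp
    rw [this]
    linear_combination ha + (1 + a) * (CharTwo.two_eq_zero : (2 : R) = 0)
  rw [sum_vadd_pow_fin_val (pow_seven_eq_one_of_pow_three_eq ha), base_line, mul_zero]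

theorem sum_pow_eq_zero_iff_isFanoLine [Nontrivial R] {a : R} (ha : a ^ 3 = a + 1)
    {S : Finset (Fin 7)} (hS : #S = 3) :
    ∑ x ∈ S, a ^ (x : ℕ) = 0 ↔ IsFanoLine S := by
  refine ⟨fun hsum => ?_, IsFanoLine.sum_pow_eq_zero ha⟩
  obtain ⟨i, j, k, hij, hik, hjk, rfl⟩ := card_eq_three.1 hS
  obtain ⟨l, hil, hjl, hline⟩ := exists_isFanoLine_of_ne i j hij
  have sum_line := hline.sum_pow_eq_zero ha
  have pow_eq : a ^ (k : ℕ) = a ^ (l : ℕ) := by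
    rw [sum_insert (by simp [*]), sum_pair ‹_›] at hsum sum_line
    linear_combination hsum - sum_line
  rwa [Fin.ext ((isPrimitiveRoot_seven_of_pow_three_eq ha).pow_inj k.isLt l.isLt pow_eq)]

variable {K : Type*} [Field K] [CharP K 2]

theorem pow_seven_eq_one_iff_of_charTwo {a : K} :
    a ^ 7 = 1 ↔ a = 1 ∨ a ^ 3 = a + 1 ∨ a⁻¹ ^ 3 = a⁻¹ + 1 := by
  constructor
  · intro ha
    have ha₀ : a ≠ 0 := by rintro rfl; simp at ha
    have factors : (a - 1) * ((a ^ 3 - (a + 1)) * (a ^ 3 - (a ^ 2 + 1))) = 0 := by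
      linear_combination ha +
        (a ^ 3 - a ^ 6) * (CharTwo.two_eq_zero : (2 : K) = 0)
    obtain h | h | h := by simpa only [mul_eq_zero, sub_eq_zero] using factors
    · exact .inl h
    · exact .inr (.inl h)
    · refine .inr (.inr ?_)
      field_simp
      linear_combination h + (1 - a ^ 3) * (CharTwo.two_eq_zero : (2 : K) = 0)
  · rintro (rfl | ha | ha)
    · exact one_pow 7
    · exact pow_seven_eq_one_of_pow_three_eq ha
    · rw [← inv_eq_one, ← inv_pow, pow_seven_eq_one_of_pow_three_eq ha]

theorem exists_pow_three_eq_add_one (K : Type*) [Field K] [IsAlgClosed K] :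
    ∃ a : K, a ^ 3 = a + 1 := by
  have degree_eq : (X ^ 3 - X - 1 : K[X]).degree = 3 := by compute_degree!
  obtain ⟨a, ha⟩ := IsAlgClosed.exists_root _ (degree_eq.trans_ne (by decide))
  refine ⟨a, ?_⟩
  simp only [IsRoot.def, eval_sub, eval_pow, eval_X, eval_one] at ha
  linear_combination ha

theorem forall_sum_pow_ne_zero_iff [IsAlgClosed K] {S : Finset (Fin 7)} (hS : #S = 3) :
    (∀ ζ : K, ζ ^ 7 = 1 → ∑ x ∈ S, ζ ^ (x : ℕ) ≠ 0) ↔ ¬IsFanoLine S ∧ ¬IsFanoLine (-S) := by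
  have sum_at_inv {a : K} (ha : a ^ 3 = a + 1) :
      ∑ x ∈ S, a⁻¹ ^ (x : ℕ) = 0 ↔ IsFanoLine (-S) := by
    rw [← sum_neg_pow_fin_val (pow_seven_eq_one_of_pow_three_eq ha),
      sum_pow_eq_zero_iff_isFanoLine ha ((card_neg S).trans hS)]
  constructor
  · intro h
    obtain ⟨a, ha⟩ := exists_pow_three_eq_add_one K
    have pow_seven : a ^ 7 = 1 := pow_seven_eq_one_of_pow_three_eq ha
    have inv_pow_seven : a⁻¹ ^ 7 = 1 := by rw [inv_pow, pow_seven, inv_one]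
    exact ⟨(sum_pow_eq_zero_iff_isFanoLine ha hS).not.1 (h a pow_seven),
      (sum_at_inv ha).not.1 (h a⁻¹ inv_pow_seven)⟩
  · rintro ⟨not_line, not_neg_line⟩ ζ hζ
    obtain rfl | h | h := pow_seven_eq_one_iff_of_charTwo.1 hζ
    · have three_ne_zero : (3 : K) ≠ 0 := fun h =>
        one_ne_zero (by linear_combination h - (CharTwo.two_eq_zero : (2 : K) = 0) : (1 : K) = 0)
      simpa [hS] using three_ne_zero
    · exact (sum_pow_eq_zero_iff_isFanoLine h hS).not.2 not_line
    · simpa only [inv_inv] using (sum_at_inv h).not.2 not_neg_line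

end CharTwo

theorem odd_permanent_sum_P7_pow_iff {S : Finset (Fin 7)} (hS : #S = 3) :
    Odd (∑ x ∈ S, P7 ^ (x : ℕ)).permanent ↔ ¬IsFanoLine S ∧ ¬IsFanoLine (-S) := by
  have sum_eq_aeval : ∑ x ∈ S, P7 ^ (x : ℕ) =
      aeval ((finRotate 7).permMatrix ℤ) (∑ x ∈ S, X ^ (x : ℕ) : ℤ[X]) := by
    simp only [map_sum, map_pow, aeval_X, P7]
  rw [sum_eq_aeval, odd_permanent_aeval_permMatrix_finRotate_iff (AlgebraicClosure (ZMod 2)),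
    ← forall_sum_pow_ne_zero_iff (K := AlgebraicClosure (ZMod 2)) hS]
  simp only [map_sum, map_pow, aeval_X]

theorem odd_permanent_P7_trinomial_iff {i j k : Fin 7} (hij : i ≠ j) (hik : i ≠ k) (hjk : j ≠ k) :
    Odd (P7 ^ (i : ℕ) + P7 ^ (j : ℕ) + P7 ^ (k : ℕ)).permanent ↔
      ¬IsFanoLine {i, j, k} ∧ ¬IsFanoLine (-{i, j, k}) := by
  rw [← odd_permanent_sum_P7_pow_iff (card_eq_three.2 ⟨i, j, k, hij, hik, hjk, rfl⟩),
    sum_insert (by simp [hij, hik]), sum_pair hjk, add_assoc]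

theorem stmt_19 :
    ((Finset.univ : Finset (Fin 7 × Fin 7 × Fin 7)).filter
        (fun t => t.1 < t.2.1 ∧ t.2.1 < t.2.2 ∧
          Odd ((P7 ^ (t.1 : ℕ) + P7 ^ (t.2.1 : ℕ) + P7 ^ (t.2.2 : ℕ)).permanent))).card
      = 21 := by
  rw [filter_congr fun t _ => and_congr_right fun hij => and_congr_right fun hjk =>
    odd_permanent_P7_trinomial_iff hij.ne (hij.trans hjk).ne hjk.ne]
  decide
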